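/- Let P^k ⊆ H⁰(M_1(𝒜)) be the ℚ-subspace of locally constant functions representable as polynomials of degree at most k in the Heaviside functions x_1,…,x_n (the Varchenko–Gelfand filtration). Then the associated graded algebra ⊕_{k≥0} P^k/P^{k−1} is isomorphic as a graded ℚ-algebra to B(𝒜), graded by total degree in the generators e_i. -/

import Mathlib

/-!
The algebra of polynomial functions in the Heaviside functions is `ℚ[X₁, …, Xₙ]` modulo the
polynomials that vanish at every sign vector of a chamber, so `Pᵏ/Pᵏ⁻¹` is the space of homogeneous
polynomials of degree `k` modulo the leading terms (degree `k` parts) of the vanishing polynomials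
of degree at most `k`. The theorem therefore amounts to the equality of this space of leading terms
with the degree `k` part of the defining ideal of `B(𝒜)` (`aeval_mem_vgPrev_iff`); the two
surjections `toGr` and `toB` from homogeneous polynomials then have the same kernel, and the induced
isomorphism `grEquiv` is multiplicative because both surjections are.

Every generator is a leading term (`IsGen.exists_lift`). The square `eᵢ²` comes from `xᵢ² - xᵢ`. If
a sign vector on `S` is realized by no point, then the product of the factors `xᵢ` and `xⱼ - 1`
prescribed by the signs vanishes (`NoChamber.vanish`). If the hyperplanes of `S` have no common
point, some sign vector on `S` is not realized (`exists_noChamber`), which gives `∏ eᵢ`. If they do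
have a common point, reflection in it shows that the opposite sign vector is not realized either
(`NoChamber.neg`), and the difference of the two products has the circuit relation as its leading
term (`signProd_sub_neg_mem`).

Conversely, every leading term of a vanishing polynomial lies in the ideal
(`mem_initPart_sup_of_vanish`). This is proved by deletion and restriction for arrangements on an
arbitrary affine subspace `K`. A vanishing polynomial can be taken to be `q + Xₙ r` with `q` and `r`
not involving `Xₙ`. Its jump across `Hₙ` is `r`, so `r` vanishes on the complement of the
restriction to `K ∩ Hₙ` (`Vanish.jump`), and by induction the leading term of `r` lies in the ideal
of the restriction. Each generator of that ideal lifts to a vanishing polynomial on `K` whose leading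
term is in the ideal of `K` (`IsGen.restrictionLift`): a convex region of `K` missing `Hₙ` lies on
one side of it, so a sign vector not realized on `Hₙ` extends to one not realized on `K`
(`NoChamber.extend`). Subtracting the lift lowers the degree of `r`; when `r = 0`, the polynomial
`q` vanishes on the complement of the deletion (`Vanish.delete`), and induction applies.
-/

/-!
Statement 3: the associated graded algebra of the Varchenko–Gelfand filtration on
`H⁰(M₁(𝒜))` is isomorphic, as a graded `ℚ`-algebra, to the Cordovil algebra `B(𝒜)`.
The isomorphism is expressed by a family of `ℚ`-linear equivalences
`Pᵏ/Pᵏ⁻¹ ≃ B(𝒜)ₖ` which is unital and compatible with products.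
-/

open MvPolynomial Set

variable {V : Type*} [NormedAddCommGroup V] [NormedSpace ℝ V] [FiniteDimensional ℝ V]
variable {n : ℕ}

/-- The complement `M₁(𝒜)` of the arrangement given by the affine forms `ω i`. -/
def M₁ (ω : Fin n → V →ᵃ[ℝ] ℝ) : Set V := {v | ∀ i, ω i v ≠ 0}

/-- The hyperplane `H i`. -/
def Hyp (ω : Fin n → V →ᵃ[ℝ] ℝ) (i : Fin n) : Set V := {v | ω i v = 0}

/-- The open positive half-space `H i⁺`. -/
def Hplus (ω : Fin n → V →ᵃ[ℝ] ℝ) (i : Fin n) : Set V := {v | 0 < ω i v}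

/-- The open negative half-space `H i⁻`. -/
def Hminus (ω : Fin n → V →ᵃ[ℝ] ℝ) (i : Fin n) : Set V := {v | ω i v < 0}

/-- The Heaviside function `x i`: the locally constant function on `M₁(𝒜)` which is
`1` on `H i⁺` and `0` on `H i⁻`. -/
noncomputable def heaviside (ω : Fin n → V →ᵃ[ℝ] ℝ) (i : Fin n) :
    LocallyConstant (M₁ ω) ℚ where
  toFun v := if 0 < ω i v.1 then 1 else 0
  isLocallyConstant := by
    rw [IsLocallyConstant.iff_exists_open]
    rintro ⟨v, hv⟩
    rcases lt_or_gt_of_ne (hv i) with h | h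
    · refine ⟨{w : M₁ ω | ω i w.1 < 0}, ?_, h, fun w hw => ?_⟩
      · exact (isOpen_lt ((ω i).continuous_of_finiteDimensional.comp
          continuous_subtype_val) continuous_const)
      · simp only [Set.mem_setOf_eq] at hw
        simp [not_lt.mpr hw.le, not_lt.mpr h.le]
    · refine ⟨{w : M₁ ω | 0 < ω i w.1}, ?_, h, fun w hw => ?_⟩
      · exact (isOpen_lt continuous_const ((ω i).continuous_of_finiteDimensional.comp
          continuous_subtype_val))
      · simp only [Set.mem_setOf_eq] at hw
        simp [hw, h]

/-- Family (1) of the Cordovil ideal: `e i ^ 2`. -/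
def bFam1 (ι : Type*) : Set (MvPolynomial ι ℚ) := {p | ∃ i : ι, p = X i ^ 2}

/-- Family (2): `∏_{i∈S} e i` whenever `⋂_{i∈S} Z i = ∅`. -/
def bFam2 {ι W : Type*} (Z : ι → Set W) : Set (MvPolynomial ι ℚ) :=
  {p | ∃ S : Finset ι, (⋂ i ∈ S, Z i) = ∅ ∧ p = ∏ i ∈ S, X i}

/-- Family (3): `Σ_{k∈S⁻} (∏_{i∈S⁺} e i · ∏_{j∈S⁻, j≠k} e j) -
Σ_{k∈S⁺} (∏_{i∈S⁺, i≠k} e i · ∏_{j∈S⁻} e j)` for disjoint `S⁺, S⁻` with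
`⋂_{i∈S⁺} Z⁺ i ∩ ⋂_{j∈S⁻} Z⁻ j = ∅` and `⋂_{i∈S⁺∪S⁻} Z i ≠ ∅`. -/
def bFam3 {ι W : Type*} [DecidableEq ι] (Z Zp Zm : ι → Set W) :
    Set (MvPolynomial ι ℚ) :=
  {p | ∃ Sp Sm : Finset ι, Disjoint Sp Sm ∧
    (⋂ i ∈ Sp, Zp i) ∩ (⋂ j ∈ Sm, Zm j) = ∅ ∧
    (⋂ i ∈ (Sp ∪ Sm : Finset ι), Z i) ≠ ∅ ∧
    p = (∑ k ∈ Sm, ((∏ i ∈ Sp, X i) * ∏ j ∈ Sm.erase k, X j)) -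
      ∑ k ∈ Sp, ((∏ i ∈ Sp.erase k, X i) * ∏ j ∈ Sm, X j)}

/-- The ideal `𝓘₀` defining the algebra `B(𝒜)`; the arrangement is recorded through its
hyperplanes `Z i` and open half-spaces `Zp i`, `Zm i`. -/
noncomputable def bIdeal {ι W : Type*} [DecidableEq ι] (Z Zp Zm : ι → Set W) :
    Ideal (MvPolynomial ι ℚ) :=
  Ideal.span (bFam1 ι ∪ bFam2 Z ∪ bFam3 Z Zp Zm)

/-- The algebra `B(𝒜) = ℚ[e_H : H ∈ 𝒜] / 𝓘₀`. -/
abbrev BAlg {ι W : Type*} [DecidableEq ι] (Z Zp Zm : ι → Set W) :=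
  MvPolynomial ι ℚ ⧸ bIdeal Z Zp Zm

/-- The degree-`k` graded component of `B(𝒜)` (grading by total degree in the
generators): the image of the homogeneous polynomials of degree `k`. -/
noncomputable def bGrade {ι W : Type*} [DecidableEq ι] (Z Zp Zm : ι → Set W) (k : ℕ) :
    Submodule ℚ (BAlg Z Zp Zm) :=
  Submodule.map (Ideal.Quotient.mkₐ ℚ (bIdeal Z Zp Zm)).toLinearMap
    (MvPolynomial.homogeneousSubmodule ι ℚ k)

/-- The Varchenko–Gelfand filtration: `Pᵏ` is the space of locally constant functions on
`M₁(𝒜)` representable by polynomials of total degree `≤ k` in the Heaviside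
functions. -/
noncomputable def vgFil (ω : Fin n → V →ᵃ[ℝ] ℝ) (k : ℕ) :
    Submodule ℚ (LocallyConstant (M₁ ω) ℚ) :=
  Submodule.map (MvPolynomial.aeval (R := ℚ) (heaviside ω)).toLinearMap
    (MvPolynomial.restrictTotalDegree (Fin n) ℚ k)

/-- The previous step `Pᵏ⁻¹` of the filtration, with `P⁻¹ = 0`. -/
noncomputable def vgPrev (ω : Fin n → V →ᵃ[ℝ] ℝ) : ℕ → Submodule ℚ (LocallyConstant (M₁ ω) ℚ)
  | 0 => ⊥
  | (k + 1) => vgFil ω k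

/-- The `k`-th graded piece `Pᵏ/Pᵏ⁻¹` of the associated graded of the VG filtration. -/
noncomputable abbrev vgGr (ω : Fin n → V →ᵃ[ℝ] ℝ) (k : ℕ) :=
  ↥(vgFil ω k) ⧸ Submodule.comap (vgFil ω k).subtype (vgPrev ω k)


/-! ### Polynomials of bounded degree in a subset of the variables -/

section LowDegree

variable {ι : Type*}

/-- Polynomials of degree strictly less than `d` in the variables indexed by `T`. The strict
inequality makes `lowPoly T 0` the zero space, matching the convention `P⁻¹ = 0`. -/
noncomputable def lowPoly (T : Finset ι) (d : ℕ) : Submodule ℚ (MvPolynomial ι ℚ) :=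
  restrictSupport ℚ {m | m.support ⊆ T ∧ m.degree < d}

theorem mem_lowPoly {T : Finset ι} {d : ℕ} {p : MvPolynomial ι ℚ} :
    p ∈ lowPoly T d ↔ ∀ m ∈ p.support, m.support ⊆ T ∧ m.degree < d := Iff.rfl

theorem lowPoly_mono {T T' : Finset ι} {d d' : ℕ} (hT : T ⊆ T') (hd : d ≤ d') :
    lowPoly T d ≤ lowPoly T' d' :=
  restrictSupport_mono ℚ fun _ hm => ⟨hm.1.trans hT, hm.2.trans_le hd⟩

theorem lowPoly_zero {T : Finset ι} {p : MvPolynomial ι ℚ} (hp : p ∈ lowPoly T 0) : p = 0 := by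
  rw [← support_eq_empty, Finset.eq_empty_iff_forall_notMem]
  intro m hm
  exact absurd (mem_lowPoly.1 hp m hm).2 (Nat.not_lt_zero _)

theorem monomial_mem_lowPoly {T : Finset ι} {d : ℕ} {m : ι →₀ ℕ} (c : ℚ)
    (hT : m.support ⊆ T) (hd : m.degree < d) : monomial m c ∈ lowPoly T d :=
  (monomial_mem_restrictSupport ℚ).2 (Or.inl ⟨hT, hd⟩)

theorem C_mem_lowPoly (T : Finset ι) {d : ℕ} (c : ℚ) (hd : 0 < d) :
    (C c : MvPolynomial ι ℚ) ∈ lowPoly T d :=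
  monomial_mem_lowPoly c (by simp) (by simpa using hd)

theorem X_mem_lowPoly {T : Finset ι} {d : ℕ} {i : ι} (hi : i ∈ T) (hd : 1 < d) :
    (X i : MvPolynomial ι ℚ) ∈ lowPoly T d := by
  classical
  refine monomial_mem_lowPoly 1 ?_ ?_
  · exact Finsupp.support_single_subset.trans (by simpa using hi)
  · simpa using hd

theorem mul_mem_lowPoly {T : Finset ι} {d e : ℕ} {p q : MvPolynomial ι ℚ}
    (hp : p ∈ lowPoly T (d + 1)) (hq : q ∈ lowPoly T e) : p * q ∈ lowPoly T (d + e) := by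
  classical
  rw [mem_lowPoly] at *
  intro m hm
  obtain ⟨a, ha, b, hb, rfl⟩ := Finset.mem_add.1 (support_mul p q hm)
  refine ⟨Finsupp.support_add.trans (Finset.union_subset (hp a ha).1 (hq b hb).1), ?_⟩
  have h1 := (hp a ha).2
  have h2 := (hq b hb).2
  rw [map_add]
  omega

theorem X_mul_mem_lowPoly {T : Finset ι} {d : ℕ} {i : ι} {p : MvPolynomial ι ℚ} (hi : i ∈ T)
    (hp : p ∈ lowPoly T d) : X i * p ∈ lowPoly T (d + 1) := by
  rw [add_comm]
  exact mul_mem_lowPoly (X_mem_lowPoly hi (by norm_num)) hp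

theorem monomial_mul_mem_lowPoly {T : Finset ι} {d : ℕ} {m : ι →₀ ℕ} {p : MvPolynomial ι ℚ}
    (hm : m.support ⊆ T) (hp : p ∈ lowPoly T d) :
    monomial m 1 * p ∈ lowPoly T (m.degree + d) :=
  mul_mem_lowPoly (monomial_mem_lowPoly 1 hm (Nat.lt_succ_self _)) hp

theorem C_mul_mem_lowPoly {T : Finset ι} {d : ℕ} (c : ℚ) {p : MvPolynomial ι ℚ}
    (hp : p ∈ lowPoly T d) : C c * p ∈ lowPoly T d := by
  rw [C_mul']
  exact Submodule.smul_mem _ _ hp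

theorem prod_X_mem_lowPoly (S : Finset ι) :
    (∏ i ∈ S, X i : MvPolynomial ι ℚ) ∈ lowPoly S (S.card + 1) := by
  classical
  induction S using Finset.induction_on with
  | empty => simpa using C_mem_lowPoly (∅ : Finset ι) 1 Nat.one_pos
  | insert n S hn ih =>
    rw [Finset.prod_insert hn, Finset.card_insert_of_notMem hn]
    exact X_mul_mem_lowPoly (Finset.mem_insert_self _ _)
      (lowPoly_mono (Finset.subset_insert _ _) le_rfl ih)

/-- A homogeneous polynomial of degree `k` has no terms of degree below `k`. -/
theorem eq_zero_of_isHomogeneous_of_mem_lowPoly {T : Finset ι} {k : ℕ} {p : MvPolynomial ι ℚ}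
    (hp : p.IsHomogeneous k) (hl : p ∈ lowPoly T k) : p = 0 := by
  rw [← support_eq_empty, Finset.eq_empty_iff_forall_notMem]
  intro m hm
  have h1 := (mem_lowPoly.1 hl m hm).2
  have h2 := hp (mem_support_iff.1 hm)
  rw [Finsupp.weight_apply] at h2
  rw [Finsupp.degree_apply] at h1
  simp [Finsupp.sum] at h2
  omega

end LowDegree

/-! ### Signed products of Heaviside factors -/

section SignedProducts

variable {ι : Type*}

/-- A choice of sides: `σ i = 1` selects the positive side of `H i` and `σ i = -1` the negative
one. -/
def IsSigns (σ : ι → ℚ) : Prop := ∀ i, σ i = 1 ∨ σ i = -1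

theorem IsSigns.neg {σ : ι → ℚ} (h : IsSigns σ) : IsSigns (-σ) := fun i => by
  rcases h i with h | h <;> simp [h]

/-- The product of `X i` over the `i ∈ S` with `σ i = 1` and of `X i - 1` over those with
`σ i = -1`. Up to sign it evaluates at the Heaviside functions to the indicator function of the
intersection of the half-spaces selected by `σ`. -/
noncomputable def signProd (σ : ι → ℚ) (S : Finset ι) : MvPolynomial ι ℚ :=
  ∏ i ∈ S, (X i - C ((1 - σ i) / 2))

/-- The circuit relation attached to `S` and `σ`. -/
noncomputable def circuitPoly [DecidableEq ι] (σ : ι → ℚ) (S : Finset ι) : MvPolynomial ι ℚ :=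
  ∑ k ∈ S, C (σ k) * ∏ i ∈ S.erase k, X i

theorem signProd_sub_mem (σ : ι → ℚ) (S : Finset ι) :
    signProd σ S - ∏ i ∈ S, X i ∈ lowPoly S S.card := by
  classical
  unfold signProd
  induction S using Finset.induction_on with
  | empty => simp
  | insert n S hn ih =>
    rw [Finset.prod_insert hn, Finset.prod_insert hn, Finset.card_insert_of_notMem hn]
    have hS : S ⊆ insert n S := Finset.subset_insert _ _
    set D := ∏ i ∈ S, (X i - C ((1 - σ i) / 2) : MvPolynomial ι ℚ)
    set E := ∏ i ∈ S, (X i : MvPolynomial ι ℚ) with hE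
    set c : MvPolynomial ι ℚ := C ((1 - σ n) / 2) with hc
    have hEm : E ∈ lowPoly (insert n S) (S.card + 1) :=
      lowPoly_mono hS le_rfl (prod_X_mem_lowPoly S)
    have ih' := lowPoly_mono hS le_rfl ih
    have : (X n - c) * D - X n * E = X n * (D - E) - (c * (D - E) + c * E) := by ring
    rw [this]
    exact sub_mem (X_mul_mem_lowPoly (Finset.mem_insert_self _ _) ih')
      (add_mem (lowPoly_mono le_rfl (Nat.le_succ _) (C_mul_mem_lowPoly _ ih'))
        (C_mul_mem_lowPoly _ hEm))

theorem signProd_mem (σ : ι → ℚ) (S : Finset ι) : signProd σ S ∈ lowPoly S (S.card + 1) := by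
  rw [← sub_add_cancel (signProd σ S) (∏ i ∈ S, X i)]
  exact add_mem (lowPoly_mono le_rfl (Nat.le_succ _) (signProd_sub_mem σ S)) (prod_X_mem_lowPoly S)

theorem circuitPoly_insert [DecidableEq ι] (σ : ι → ℚ) {S : Finset ι} {n : ι} (hn : n ∉ S) :
    circuitPoly σ (insert n S) = X n * circuitPoly σ S + C (σ n) * ∏ i ∈ S, X i := by
  unfold circuitPoly
  rw [Finset.sum_insert hn, Finset.erase_insert hn, add_comm, Finset.mul_sum]
  congr 1
  refine Finset.sum_congr rfl fun k hk => ?_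
  have hkn : n ≠ k := fun h => hn (h ▸ hk)
  rw [Finset.erase_insert_of_ne hkn, Finset.prod_insert (by simp [hn])]
  ring

theorem circuitPoly_congr [DecidableEq ι] {σ τ : ι → ℚ} {S : Finset ι} (h : ∀ i ∈ S, σ i = τ i) :
    circuitPoly σ S = circuitPoly τ S :=
  Finset.sum_congr rfl fun k hk => by rw [h k hk]

theorem signProd_congr {σ τ : ι → ℚ} {S : Finset ι} (h : ∀ i ∈ S, σ i = τ i) :
    signProd σ S = signProd τ S :=
  Finset.prod_congr rfl fun k hk => by rw [h k hk]

theorem signProd_insert [DecidableEq ι] (σ : ι → ℚ) {S : Finset ι} {n : ι} (hn : n ∉ S) :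
    signProd σ (insert n S) = (X n - C ((1 - σ n) / 2)) * signProd σ S :=
  Finset.prod_insert hn

theorem circuitPoly_mem [DecidableEq ι] (σ : ι → ℚ) (S : Finset ι) :
    circuitPoly σ S ∈ lowPoly S S.card := by
  refine Submodule.sum_mem _ fun k hk => C_mul_mem_lowPoly _ ?_
  rw [← Finset.card_erase_add_one hk]
  exact lowPoly_mono (Finset.erase_subset _ _) le_rfl (prod_X_mem_lowPoly _)

/-- The products for opposite choices of sides have the same leading term, and the leading term
of their difference is the circuit relation. -/
theorem signProd_sub_neg_mem [DecidableEq ι] (σ : ι → ℚ) (S : Finset ι) :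
    signProd σ S - signProd (-σ) S - circuitPoly σ S ∈ lowPoly S (S.card - 1) := by
  induction S using Finset.induction_on with
  | empty => simp [signProd, circuitPoly]
  | insert n S hn ih =>
    rw [circuitPoly_insert σ hn, signProd_insert σ hn, signProd_insert (-σ) hn,
      Finset.card_insert_of_notMem hn, Nat.add_sub_cancel]
    have hS : S ⊆ insert n S := Finset.subset_insert _ _
    rcases S.eq_empty_or_nonempty with rfl | hne
    · have h2 : (C ((1 - σ n) / 2) : MvPolynomial ι ℚ) = C ((1 - (-σ) n) / 2) - C (σ n) := by
        rw [← C_sub]; congr 1; simp only [Pi.neg_apply]; ring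
      have : (X n - C ((1 - σ n) / 2)) * signProd σ ∅ - (X n - C ((1 - (-σ) n) / 2)) *
          signProd (-σ) ∅ - (X n * circuitPoly σ ∅ + C (σ n) * ∏ i ∈ ∅, X i) =
          (0 : MvPolynomial ι ℚ) := by
        rw [h2]; simp only [signProd, circuitPoly, Finset.prod_empty, Finset.sum_empty]; ring
      rw [this]
      exact zero_mem _
    · have hc : S.card - 1 + 1 = S.card := Nat.sub_add_cancel hne.card_pos
      have h1 := X_mul_mem_lowPoly (Finset.mem_insert_self n S) (lowPoly_mono hS le_rfl ih)
      rw [hc] at h1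
      have h2 := lowPoly_mono hS le_rfl (signProd_sub_mem σ S)
      have h3 := lowPoly_mono hS le_rfl (signProd_sub_mem (-σ) S)
      have h4 : (C ((1 - σ n) / 2) : MvPolynomial ι ℚ) = C ((1 - (-σ) n) / 2) - C (σ n) := by
        rw [← C_sub]; congr 1; simp only [Pi.neg_apply]; ring
      have key : (X n - C ((1 - σ n) / 2)) * signProd σ S - (X n - C ((1 - (-σ) n) / 2)) *
          signProd (-σ) S - (X n * circuitPoly σ S + C (σ n) * ∏ i ∈ S, X i) =
          X n * (signProd σ S - signProd (-σ) S - circuitPoly σ S)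
          - C ((1 - σ n) / 2) * (signProd σ S - ∏ i ∈ S, X i)
          + C ((1 - (-σ) n) / 2) * (signProd (-σ) S - ∏ i ∈ S, X i) := by
        rw [h4]; ring
      rw [key]
      exact add_mem (sub_mem h1 (C_mul_mem_lowPoly _ h2)) (C_mul_mem_lowPoly _ h3)

end SignedProducts

/-! ### Half-spaces over an affine subspace -/

section Geometry

variable {ι V : Type*} [AddCommGroup V] [Module ℝ V]

/-- No point of `K` lies in all the open half-spaces selected by `σ` over `S`. -/
def NoChamber (ω : ι → V →ᵃ[ℝ] ℝ) (K : AffineSubspace ℝ V) (S : Finset ι) (σ : ι → ℚ) : Prop :=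
  ∀ v ∈ K, ∃ i ∈ S, (σ i : ℝ) * ω i v ≤ 0

/-- The intersection of `K` with the zero locus of the affine form `f`. -/
def cutBy (K : AffineSubspace ℝ V) (f : V →ᵃ[ℝ] ℝ) : AffineSubspace ℝ V :=
  K ⊓ (AffineSubspace.mk' (0 : ℝ) ⊥).comap f

theorem mem_cutBy {K : AffineSubspace ℝ V} {f : V →ᵃ[ℝ] ℝ} {v : V} :
    v ∈ cutBy K f ↔ v ∈ K ∧ f v = 0 := by
  simp [cutBy, AffineSubspace.mem_inf_iff, AffineSubspace.mem_comap, AffineSubspace.mem_mk']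

theorem affine_lineMap (f : V →ᵃ[ℝ] ℝ) (v w : V) (t : ℝ) :
    f (AffineMap.lineMap v w t) = (1 - t) * f v + t * f w := by
  rw [AffineMap.apply_lineMap, AffineMap.lineMap_apply_ring']
  ring

/-- A convex region that misses the hyperplane `H n` lies on one side of it: an empty region over
`K ∩ H n` stays empty over `K` once a suitable side of `H n` is added to its description. -/
theorem NoChamber.extend [DecidableEq ι] {ω : ι → V →ᵃ[ℝ] ℝ} {K : AffineSubspace ℝ V}
    {S : Finset ι} {σ : ι → ℚ} {n : ι} (hn : n ∉ S) (hσ : IsSigns σ)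
    (h : NoChamber ω (cutBy K (ω n)) S σ) :
    ∃ τ : ι → ℚ, IsSigns τ ∧ (∀ i ∈ S, τ i = σ i) ∧ NoChamber ω K (insert n S) τ := by
  have upd : ∀ c : ℚ, ∀ i ∈ S, Function.update σ n c i = σ i := fun c i hi =>
    Function.update_of_ne (fun hin : i = n => hn (hin ▸ hi)) _ _
  have sg : ∀ c : ℚ, c = 1 ∨ c = -1 → IsSigns (Function.update σ n c) := fun c hc i => by
    by_cases hi : i = n
    · subst hi; simpa using hc
    · simpa [hi] using hσ i
  by_contra hcon
  push Not at hcon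
  have h1 := hcon (Function.update σ n 1) (sg 1 (Or.inl rfl)) (upd 1)
  have h2 := hcon (Function.update σ n (-1)) (sg (-1) (Or.inr rfl)) (upd (-1))
  unfold NoChamber at h1 h2
  push Not at h1 h2
  obtain ⟨v, hv, hv'⟩ := h1
  obtain ⟨w, hw, hw'⟩ := h2
  have hvn : 0 < ω n v := by simpa using hv' n (Finset.mem_insert_self _ _)
  have hwn : ω n w < 0 := by simpa using hw' n (Finset.mem_insert_self _ _)
  -- the point of the segment from `v` to `w` that lies on `H n`
  have hd : 0 < ω n v - ω n w := by linarith
  set t : ℝ := ω n v / (ω n v - ω n w) with ht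
  have ht0 : 0 < t := div_pos hvn hd
  have ht1 : t < 1 := by rw [ht, div_lt_one hd]; linarith
  have hz : ω n (AffineMap.lineMap v w t) = 0 := by
    rw [affine_lineMap, ht]; field_simp; ring
  obtain ⟨i, hi, hle⟩ := h _ (mem_cutBy.2 ⟨AffineMap.lineMap_mem t hv hw, hz⟩)
  have a1 := hv' i (Finset.mem_insert_of_mem hi)
  have a2 := hw' i (Finset.mem_insert_of_mem hi)
  rw [upd _ i hi] at a1 a2
  rw [affine_lineMap] at hle
  nlinarith [mul_pos ht0 a2, mul_pos (sub_pos.2 ht1) a1]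

/-- Hyperplanes without a common point in `K` admit a choice of sides with empty
intersection. -/
theorem exists_noChamber [DecidableEq ι] (ω : ι → V →ᵃ[ℝ] ℝ) (S : Finset ι)
    (K : AffineSubspace ℝ V) (h : ∀ v ∈ K, ∃ i ∈ S, ω i v ≠ 0) :
    ∃ σ, IsSigns σ ∧ NoChamber ω K S σ := by
  induction S using Finset.induction_on generalizing K with
  | empty =>
    refine ⟨fun _ => 1, fun _ => Or.inl rfl, fun v hv => ?_⟩
    obtain ⟨i, hi, _⟩ := h v hv
    simp at hi
  | insert n S hn ih =>
    obtain ⟨σ, hσ, hc⟩ := ih (cutBy K (ω n)) fun v hv => by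
      rw [mem_cutBy] at hv
      obtain ⟨i, hi, hne⟩ := h v hv.1
      rcases Finset.mem_insert.1 hi with rfl | hi
      · exact absurd hv.2 hne
      · exact ⟨i, hi, hne⟩
    obtain ⟨τ, hτ, _, h'⟩ := hc.extend hn hσ
    exact ⟨τ, hτ, h'⟩

/-- For a central family, reflection in a common zero exchanges the two opposite choices of
sides. -/
theorem NoChamber.neg {ω : ι → V →ᵃ[ℝ] ℝ} {K : AffineSubspace ℝ V} {S : Finset ι} {σ : ι → ℚ}
    (h : NoChamber ω K S σ) {c : V} (hc : c ∈ K) (hz : ∀ i ∈ S, ω i c = 0) :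
    NoChamber ω K S (-σ) := by
  intro v hv
  obtain ⟨i, hi, hle⟩ := h _ (AffineMap.lineMap_mem (-1 : ℝ) hc hv)
  refine ⟨i, hi, ?_⟩
  rw [affine_lineMap, hz i hi] at hle
  simp only [Pi.neg_apply, Rat.cast_neg]
  linarith

/-- The values at `v` of the Heaviside functions. -/
noncomputable def hval (ω : ι → V →ᵃ[ℝ] ℝ) (v : V) (i : ι) : ℚ := if 0 < ω i v then 1 else 0

/-- The polynomial `p` in the Heaviside functions vanishes on the complement in `K` of the
hyperplanes indexed by `T`. -/
def Vanish (ω : ι → V →ᵃ[ℝ] ℝ) (T : Finset ι) (K : AffineSubspace ℝ V)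
    (p : MvPolynomial ι ℚ) : Prop :=
  ∀ v ∈ K, (∀ i ∈ T, ω i v ≠ 0) → eval (hval ω v) p = 0

variable {ω : ι → V →ᵃ[ℝ] ℝ} {T : Finset ι} {K : AffineSubspace ℝ V}

theorem Vanish.add {p q : MvPolynomial ι ℚ} (hp : Vanish ω T K p) (hq : Vanish ω T K q) :
    Vanish ω T K (p + q) := fun v hv h => by rw [map_add, hp v hv h, hq v hv h, add_zero]

theorem Vanish.sub {p q : MvPolynomial ι ℚ} (hp : Vanish ω T K p) (hq : Vanish ω T K q) :
    Vanish ω T K (p - q) := fun v hv h => by rw [map_sub, hp v hv h, hq v hv h, sub_zero]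

theorem Vanish.mul {q : MvPolynomial ι ℚ} (p : MvPolynomial ι ℚ) (hq : Vanish ω T K q) :
    Vanish ω T K (p * q) := fun v hv h => by rw [map_mul, hq v hv h, mul_zero]

theorem Vanish.zero : Vanish ω T K 0 := fun _ _ _ => map_zero _

theorem NoChamber.vanish {S : Finset ι} {σ : ι → ℚ} (hσ : IsSigns σ) (hS : S ⊆ T)
    (h : NoChamber ω K S σ) : Vanish ω T K (signProd σ S) := by
  intro v hv hne
  obtain ⟨i, hi, hle⟩ := h v hv
  have hi0 := hne i (hS hi)
  rw [signProd, map_prod]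
  refine Finset.prod_eq_zero hi ?_
  rcases hσ i with hs | hs
  · have : ¬ 0 < ω i v := by
      rw [hs] at hle; push_cast at hle; linarith
    simp [hval, hs, this]
  · have : 0 < ω i v := by
      rw [hs] at hle; push_cast at hle
      exact lt_of_le_of_ne (by linarith) (Ne.symm hi0)
    simp [hval, hs, this]

end Geometry

/-! ### Crossing a hyperplane -/

section Perturbation

variable {ι V : Type*} [AddCommGroup V] [Module ℝ V]
variable {ω : ι → V →ᵃ[ℝ] ℝ} {T : Finset ι} {K : AffineSubspace ℝ V}

/-- A generic point of `H n` can be pushed to either side of `H n` inside `K`, provided `ω n` does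
not vanish identically on `K`, without crossing the other hyperplanes. -/
theorem exists_pushed_points {n : ι} {v w : V} (hv : v ∈ cutBy K (ω n)) (hw : w ∈ K)
    (hwn : ω n w ≠ 0) (hT : ∀ i ∈ T, ω i v ≠ 0) :
    ∃ z ∈ K, ∃ z' ∈ K, 0 < ω n z ∧ ω n z' < 0 ∧
      ∀ i ∈ T, (ω i z ≠ 0 ∧ hval ω z i = hval ω v i) ∧
        (ω i z' ≠ 0 ∧ hval ω z' i = hval ω v i) := by
  rw [mem_cutBy] at hv
  have hev : ∀ᶠ t : ℝ in nhds 0, ∀ i ∈ T, 0 < ω i (AffineMap.lineMap v w t) * ω i v := by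
    rw [Filter.eventually_all_finset]
    intro i hi
    have hcont : Continuous fun t : ℝ => ω i (AffineMap.lineMap v w t) * ω i v := by
      simp only [affine_lineMap]
      fun_prop
    refine hcont.continuousAt.eventually_mem (isOpen_Ioi.mem_nhds ?_)
    simpa using mul_self_pos.2 (hT i hi)
  obtain ⟨δ, hδ, hball⟩ := Metric.eventually_nhds_iff.1 hev
  have key : ∀ t : ℝ, |t| < δ → ∀ i ∈ T, ω i (AffineMap.lineMap v w t) ≠ 0 ∧
      hval ω (AffineMap.lineMap v w t) i = hval ω v i := by
    intro t ht i hi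
    have h := hball (by simpa using ht) i hi
    refine ⟨fun h0 => by simp [h0] at h, ?_⟩
    unfold hval
    rcases pos_and_pos_or_neg_and_neg_of_mul_pos h with ⟨h1, h2⟩ | ⟨h1, h2⟩
    · rw [if_pos h1, if_pos h2]
    · rw [if_neg (not_lt.2 h1.le), if_neg (not_lt.2 h2.le)]
  have hval_n : ∀ t : ℝ, ω n (AffineMap.lineMap v w t) = t * ω n w := fun t => by
    rw [affine_lineMap, hv.2]; ring
  have h1 : |δ / 2| < δ := by rw [abs_of_pos (half_pos hδ)]; linarith
  have h2 : |-(δ / 2)| < δ := by rwa [abs_neg]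
  have hm : ∀ t : ℝ, AffineMap.lineMap v w t ∈ K := fun t => AffineMap.lineMap_mem t hv.1 hw
  rcases lt_or_gt_of_ne hwn with hneg | hpos
  · refine ⟨_, hm (-(δ / 2)), _, hm (δ / 2), ?_, ?_, fun i hi => ⟨key _ h2 i hi, key _ h1 i hi⟩⟩
    · rw [hval_n]; nlinarith
    · rw [hval_n]; nlinarith
  · refine ⟨_, hm (δ / 2), _, hm (-(δ / 2)), ?_, ?_, fun i hi => ⟨key _ h1 i hi, key _ h2 i hi⟩⟩
    · rw [hval_n]; nlinarith
    · rw [hval_n]; nlinarith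

theorem eval_congr_of_mem_lowPoly {d : ℕ} {p : MvPolynomial ι ℚ} (hp : p ∈ lowPoly T d)
    {f g : ι → ℚ} (h : ∀ i ∈ T, f i = g i) : eval f p = eval g p := by
  rw [eval_eq, eval_eq]
  refine Finset.sum_congr rfl fun m hm => ?_
  congr 1
  refine Finset.prod_congr rfl fun i hi => ?_
  rw [h i ((mem_lowPoly.1 hp m hm).1 hi)]

variable [DecidableEq ι] {n : ι}

/-- The jump of `q + X n * r` across `H n` is `r`. -/
theorem Vanish.jump {q r : MvPolynomial ι ℚ} {d e : ℕ} (hq : q ∈ lowPoly T d)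
    (hr : r ∈ lowPoly T e) (h : Vanish ω (insert n T) K (q + X n * r)) {w : V} (hw : w ∈ K)
    (hwn : ω n w ≠ 0) : Vanish ω T (cutBy K (ω n)) r := by
  intro v hv hne
  obtain ⟨z, hz, z', hz', hp, hm, hT⟩ := exists_pushed_points hv hw hwn hne
  have e1 := h z hz (by
    intro i hi
    rcases Finset.mem_insert.1 hi with rfl | hi
    exacts [hp.ne', (hT i hi).1.1])
  have e2 := h z' hz' (by
    intro i hi
    rcases Finset.mem_insert.1 hi with rfl | hi
    exacts [hm.ne, (hT i hi).2.1])
  simp only [map_add, map_mul, eval_X] at e1 e2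
  rw [eval_congr_of_mem_lowPoly hq (fun i hi => (hT i hi).1.2),
    eval_congr_of_mem_lowPoly hr (fun i hi => (hT i hi).1.2)] at e1
  rw [eval_congr_of_mem_lowPoly hq (fun i hi => (hT i hi).2.2),
    eval_congr_of_mem_lowPoly hr (fun i hi => (hT i hi).2.2)] at e2
  rw [hval, if_pos hp] at e1
  rw [hval, if_neg (not_lt.2 hm.le)] at e2
  linarith

/-- A polynomial not involving `x n` that vanishes off all hyperplanes also vanishes at the points
of `H n` off the other hyperplanes. -/
theorem Vanish.delete {q : MvPolynomial ι ℚ} {d : ℕ} (hq : q ∈ lowPoly T d)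
    (h : Vanish ω (insert n T) K q) {w : V} (hw : w ∈ K) (hwn : ω n w ≠ 0) :
    Vanish ω T K q := by
  intro v hv hne
  by_cases h0 : ω n v = 0
  · obtain ⟨z, hz, z', hz', hp, hm, hT⟩ :=
      exists_pushed_points (mem_cutBy.2 ⟨hv, h0⟩) hw hwn hne
    rw [← eval_congr_of_mem_lowPoly hq (fun i hi => (hT i hi).1.2)]
    refine h z hz ?_
    intro i hi
    rcases Finset.mem_insert.1 hi with rfl | hi
    exacts [hp.ne', (hT i hi).1.1]
  · refine h v hv ?_
    intro i hi
    rcases Finset.mem_insert.1 hi with rfl | hi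
    exacts [h0, hne i hi]

end Perturbation

/-! ### The graded pieces of the defining ideal -/

section InitialPart

variable {ι V : Type*} [AddCommGroup V] [Module ℝ V] [DecidableEq ι]

/-- The generators of the ideal of the arrangement cut out on `K` by the hyperplanes indexed by
`T`, together with their degrees. The disjoint sets `S⁺, S⁻` of a circuit relation are encoded as
their union `S` and a sign function `σ`. -/
inductive IsGen (ω : ι → V →ᵃ[ℝ] ℝ) (T : Finset ι) (K : AffineSubspace ℝ V) :
    ℕ → MvPolynomial ι ℚ → Prop
  | sq (i : ι) (hi : i ∈ T) : IsGen ω T K 2 (X i ^ 2)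
  | empty (S : Finset ι) (hS : S ⊆ T) (h : ∀ v ∈ K, ∃ i ∈ S, ω i v ≠ 0) :
      IsGen ω T K S.card (∏ i ∈ S, X i)
  | circuit (S : Finset ι) (hS : S ⊆ T) (σ : ι → ℚ) (hσ : IsSigns σ) (h : NoChamber ω K S σ)
      (c : V) (hc : c ∈ K) (hz : ∀ i ∈ S, ω i c = 0) :
      IsGen ω T K (S.card - 1) (circuitPoly σ S)

/-- The degree `d` piece of the ideal generated by `IsGen ω T K` in the polynomial ring in the
variables indexed by `T`. -/
noncomputable def initPart (ω : ι → V →ᵃ[ℝ] ℝ) (T : Finset ι) (K : AffineSubspace ℝ V) (d : ℕ) :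
    Submodule ℚ (MvPolynomial ι ℚ) :=
  Submodule.span ℚ {u | ∃ (m : ι →₀ ℕ) (e : ℕ) (g : MvPolynomial ι ℚ), m.support ⊆ T ∧
    IsGen ω T K e g ∧ m.degree + e = d ∧ u = monomial m 1 * g}

variable {ω : ι → V →ᵃ[ℝ] ℝ} {T : Finset ι} {K : AffineSubspace ℝ V}

theorem IsGen.mono {T' : Finset ι} (h : T ⊆ T') {e : ℕ} {g : MvPolynomial ι ℚ}
    (hg : IsGen ω T K e g) : IsGen ω T' K e g := by
  cases hg with
  | sq i hi => exact .sq i (h hi)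
  | empty S hS h' => exact .empty S (hS.trans h) h'
  | circuit S hS σ hσ h' c hc hz => exact .circuit S (hS.trans h) σ hσ h' c hc hz

theorem initPart_mono {T' : Finset ι} (h : T ⊆ T') (d : ℕ) :
    initPart ω T K d ≤ initPart ω T' K d :=
  Submodule.span_mono fun _ ⟨m, e, g, hm, hg, hd, hu⟩ => ⟨m, e, g, hm.trans h, hg.mono h, hd, hu⟩

theorem IsGen.mem_initPart {e : ℕ} {g : MvPolynomial ι ℚ} (hg : IsGen ω T K e g) :
    g ∈ initPart ω T K e :=
  Submodule.subset_span ⟨0, e, g, by simp, hg, by simp, by simp⟩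

theorem monomial_mul_mem_initPart {m : ι →₀ ℕ} {d : ℕ} {u : MvPolynomial ι ℚ}
    (hm : m.support ⊆ T) (hu : u ∈ initPart ω T K d) :
    monomial m 1 * u ∈ initPart ω T K (m.degree + d) := by
  induction hu using Submodule.span_induction with
  | mem x hx =>
    obtain ⟨m', e, g, hm', hg, rfl, rfl⟩ := hx
    refine Submodule.subset_span ⟨m + m', e, g,
      Finsupp.support_add.trans (Finset.union_subset hm hm'), hg, by rw [map_add]; ring, ?_⟩
    rw [← mul_assoc, monomial_mul, one_mul]
  | zero => simp
  | add x y _ _ hx hy => rw [mul_add]; exact add_mem hx hy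
  | smul a x _ hx => rw [mul_smul_comm]; exact Submodule.smul_mem _ _ hx

/-- Every generator is the leading term of a polynomial that vanishes on the complement. -/
theorem IsGen.exists_lift {e : ℕ} {g : MvPolynomial ι ℚ} (hg : IsGen ω T K e g) :
    ∃ l ∈ lowPoly T e, Vanish ω T K (g + l) := by
  cases hg with
  | sq i hi =>
    refine ⟨-X i, neg_mem (X_mem_lowPoly hi (by norm_num)), fun v _ _ => ?_⟩
    by_cases h : 0 < ω i v <;> simp [hval, h]
  | empty S hS h =>
    obtain ⟨σ, hσ, hc⟩ := exists_noChamber ω S K h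
    refine ⟨_, lowPoly_mono hS le_rfl (signProd_sub_mem σ S), ?_⟩
    rw [add_sub_cancel]
    exact hc.vanish hσ hS
  | circuit S hS σ hσ h c hc hz =>
    refine ⟨_, lowPoly_mono hS le_rfl (signProd_sub_neg_mem σ S), ?_⟩
    rw [add_sub_cancel]
    exact (h.vanish hσ hS).sub ((h.neg hc hz).vanish hσ.neg hS)

theorem exists_lift_of_mem_initPart {d : ℕ} {u : MvPolynomial ι ℚ} (hu : u ∈ initPart ω T K d) :
    ∃ l ∈ lowPoly T d, Vanish ω T K (u + l) := by
  induction hu using Submodule.span_induction with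
  | mem x hx =>
    obtain ⟨m, e, g, hm, hg, rfl, rfl⟩ := hx
    obtain ⟨l, hl, hv⟩ := hg.exists_lift
    exact ⟨_, monomial_mul_mem_lowPoly hm hl, by rw [← mul_add]; exact hv.mul _⟩
  | zero => exact ⟨0, zero_mem _, by simpa using Vanish.zero⟩
  | add x y _ _ hx hy =>
    obtain ⟨l, hl, hv⟩ := hx
    obtain ⟨l', hl', hv'⟩ := hy
    exact ⟨l + l', add_mem hl hl', by rw [add_add_add_comm]; exact hv.add hv'⟩
  | smul a x _ hx =>
    obtain ⟨l, hl, hv⟩ := hx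
    refine ⟨a • l, Submodule.smul_mem _ _ hl, ?_⟩
    rw [← smul_add, ← C_mul']
    exact hv.mul _

/-- The condition that `u`, of degree `d` and in the variables `T`, lifts from the restriction of
the arrangement to `H n`: some polynomial that vanishes off the hyperplanes `insert n T` in `K` has
`X n`-coefficient with leading term `u`, and its own leading term lies in the ideal. -/
def RestrictionLift (ω : ι → V →ᵃ[ℝ] ℝ) (T : Finset ι) (K : AffineSubspace ℝ V) (n : ι) (d : ℕ)
    (u : MvPolynomial ι ℚ) : Prop :=
  ∃ h ∈ lowPoly T (d + 2), ∃ l ∈ lowPoly T d, ∃ w ∈ initPart ω (insert n T) K (d + 1),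
    Vanish ω (insert n T) K (h + X n * (u + l)) ∧
      h + X n * u - w ∈ lowPoly (insert n T) (d + 1)

/-- In the cases `empty` and `circuit`, a sign vector not realized on `H n` extends by a sign at `n`
to one not realized on `K`, and the associated signed products provide the lift. -/
theorem IsGen.restrictionLift {n : ι} (hn : n ∉ T) {e : ℕ} {g : MvPolynomial ι ℚ}
    (hg : IsGen ω T (cutBy K (ω n)) e g) : RestrictionLift ω T K n e g := by
  have hnT : n ∈ insert n T := Finset.mem_insert_self _ _
  have hTT : T ⊆ insert n T := Finset.subset_insert _ _
  cases hg with
  | sq i hi =>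
    have hw := monomial_mul_mem_initPart (m := Finsupp.single n 1) (K := K) (ω := ω)
      (T := insert n T) (Finsupp.support_single_subset.trans (by simp))
      (IsGen.sq (ω := ω) (K := K) i (hTT hi)).mem_initPart
    rw [Finsupp.degree_single, add_comm] at hw
    refine ⟨0, zero_mem _, -X i, neg_mem (X_mem_lowPoly hi (by norm_num)), _, hw, ?_, ?_⟩
    · rw [zero_add]
      refine Vanish.mul _ fun v _ _ => ?_
      by_cases h : 0 < ω i v <;> simp [hval, h]
    · have : (0 : MvPolynomial ι ℚ) + X n * X i ^ 2 - monomial (Finsupp.single n 1) 1 * X i ^ 2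
          = 0 := by
        rw [zero_add]; exact sub_self _
      rw [this]
      exact zero_mem _
  | empty S hS h =>
    obtain ⟨σ, hσ, hc⟩ := exists_noChamber ω S _ h
    have hnS : n ∉ S := fun h => hn (hS h)
    obtain ⟨τ, hτ, hτσ, hc'⟩ := hc.extend hnS hσ
    have hSS : insert n S ⊆ insert n T := Finset.insert_subset_insert n hS
    have hgen : IsGen ω (insert n T) K (S.card + 1) (X n * ∏ i ∈ S, X i) := by
      rw [← Finset.prod_insert hnS, ← Finset.card_insert_of_notMem hnS]
      refine .empty _ hSS fun v hv => ?_
      by_cases h0 : ω n v = 0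
      · obtain ⟨i, hi, hne⟩ := h v (mem_cutBy.2 ⟨hv, h0⟩)
        exact ⟨i, Finset.mem_insert_of_mem hi, hne⟩
      · exact ⟨n, Finset.mem_insert_self _ _, h0⟩
    have hD := lowPoly_mono hS le_rfl (signProd_mem τ S)
    have hh : -(C ((1 - τ n) / 2) * signProd τ S) ∈ lowPoly T (S.card + 1) :=
      neg_mem (C_mul_mem_lowPoly _ hD)
    refine ⟨_, lowPoly_mono le_rfl (Nat.le_succ _) hh, _,
      lowPoly_mono hS le_rfl (signProd_sub_mem τ S), _, hgen.mem_initPart, ?_, ?_⟩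
    · have hv := hc'.vanish hτ hSS
      rw [signProd_insert τ hnS] at hv
      convert hv using 1
      ring
    · rw [add_sub_cancel_right]
      exact lowPoly_mono hTT le_rfl hh
  | circuit S hS σ hσ h c hc hz =>
    have hnS : n ∉ S := fun h => hn (hS h)
    obtain ⟨τ, hτ, hτσ, hc'⟩ := h.extend hnS hσ
    have hSS : insert n S ⊆ insert n T := Finset.insert_subset_insert n hS
    obtain ⟨i₀, hi₀, -⟩ := h c hc
    have hpos : 0 < S.card := Finset.card_pos.2 ⟨i₀, hi₀⟩
    have hcard : S.card - 1 + 1 = S.card := Nat.sub_add_cancel hpos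
    have hcard2 : S.card - 1 + 2 = S.card + 1 := by omega
    rw [mem_cutBy] at hc
    have hz' : ∀ i ∈ insert n S, ω i c = 0 := by
      intro i hi
      rcases Finset.mem_insert.1 hi with rfl | hi
      exacts [hc.2, hz i hi]
    have hgen := IsGen.circuit (T := insert n T) _ hSS τ hτ hc' c hc.1 hz'
    rw [Finset.card_insert_of_notMem hnS, Nat.add_sub_cancel] at hgen
    rw [← circuitPoly_congr hτσ]
    unfold RestrictionLift
    rw [hcard, hcard2]
    have hD := lowPoly_mono hS le_rfl (signProd_mem τ S)
    have hD' := lowPoly_mono hS le_rfl (signProd_mem (-τ) S)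
    have hb : (C ((1 - (-τ) n) / 2) : MvPolynomial ι ℚ) = C ((1 - τ n) / 2) + C (τ n) := by
      rw [← C_add]; congr 1; simp only [Pi.neg_apply]; ring
    refine ⟨C ((1 - (-τ) n) / 2) * signProd (-τ) S - C ((1 - τ n) / 2) * signProd τ S,
      sub_mem (C_mul_mem_lowPoly _ hD') (C_mul_mem_lowPoly _ hD), _,
      lowPoly_mono hS le_rfl (signProd_sub_neg_mem τ S), _, hgen.mem_initPart, ?_, ?_⟩
    · have hv := (hc'.vanish hτ hSS).sub ((hc'.neg hc.1 hz').vanish hτ.neg hSS)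
      rw [signProd_insert τ hnS, signProd_insert (-τ) hnS] at hv
      convert hv using 1
      ring
    · rw [circuitPoly_insert τ hnS, hb]
      have h2 := lowPoly_mono (hS.trans hTT) le_rfl (signProd_sub_mem τ S)
      have h3 := lowPoly_mono (hS.trans hTT) le_rfl (signProd_sub_mem (-τ) S)
      have : (C ((1 - τ n) / 2) + C (τ n)) * signProd (-τ) S - C ((1 - τ n) / 2) * signProd τ S +
          X n * circuitPoly τ S - (X n * circuitPoly τ S + C (τ n) * ∏ i ∈ S, X i) =
          C ((1 - τ n) / 2) * (signProd (-τ) S - ∏ i ∈ S, X i)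
          - C ((1 - τ n) / 2) * (signProd τ S - ∏ i ∈ S, X i)
          + C (τ n) * (signProd (-τ) S - ∏ i ∈ S, X i) := by ring
      rw [this]
      exact add_mem (sub_mem (C_mul_mem_lowPoly _ h3) (C_mul_mem_lowPoly _ h2))
        (C_mul_mem_lowPoly _ h3)

theorem restrictionLift_of_mem {n : ι} (hn : n ∉ T) {d : ℕ} {u : MvPolynomial ι ℚ}
    (hu : u ∈ initPart ω T (cutBy K (ω n)) d) : RestrictionLift ω T K n d u := by
  have hTT : T ⊆ insert n T := Finset.subset_insert _ _
  induction hu using Submodule.span_induction with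
  | mem x hx =>
    obtain ⟨m, e, g, hm, hg, rfl, rfl⟩ := hx
    obtain ⟨h, hh, l, hl, w, hw, hv, hlow⟩ := hg.restrictionLift hn
    have hh' := monomial_mul_mem_lowPoly hm hh
    have hw' := monomial_mul_mem_initPart (hm.trans hTT) hw
    have hlow' := monomial_mul_mem_lowPoly (hm.trans hTT) hlow
    rw [← add_assoc] at hh' hw' hlow'
    refine ⟨monomial m 1 * h, hh', monomial m 1 * l, monomial_mul_mem_lowPoly hm hl,
      monomial m 1 * w, hw', ?_, ?_⟩
    · have e1 : monomial m 1 * h + X n * (monomial m 1 * g + monomial m 1 * l) =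
          monomial m 1 * (h + X n * (g + l)) := by ring
      rw [e1]
      exact hv.mul _
    · have e1 : monomial m 1 * h + X n * (monomial m 1 * g) - monomial m 1 * w =
          monomial m 1 * (h + X n * g - w) := by ring
      rw [e1]
      exact hlow'
  | zero =>
    exact ⟨0, zero_mem _, 0, zero_mem _, 0, zero_mem _, by simpa using Vanish.zero, by simp⟩
  | add x y _ _ hx hy =>
    obtain ⟨h, hh, l, hl, w, hw, hv, hlow⟩ := hx
    obtain ⟨h', hh', l', hl', w', hw', hv', hlow'⟩ := hy
    refine ⟨_, add_mem hh hh', _, add_mem hl hl', _, add_mem hw hw', ?_, ?_⟩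
    · convert hv.add hv' using 1
      ring
    · convert add_mem hlow hlow' using 1
      ring
  | smul a x _ hx =>
    obtain ⟨h, hh, l, hl, w, hw, hv, hlow⟩ := hx
    refine ⟨_, Submodule.smul_mem _ a hh, _, Submodule.smul_mem _ a hl, _,
      Submodule.smul_mem _ a hw, ?_, ?_⟩
    · convert hv.mul (C a) using 1
      simp only [← C_mul']
      ring
    · convert Submodule.smul_mem _ a hlow using 1
      simp only [← C_mul']
      ring

/-- If the ideal contains a nonzero constant then it contains everything. -/
theorem mem_sup_of_const {c : ℚ} (hc : c ≠ 0) (hg : IsGen ω T K 0 (C c)) {k : ℕ}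
    {p : MvPolynomial ι ℚ} (hp : p ∈ lowPoly T (k + 1)) :
    p ∈ initPart ω T K k ⊔ lowPoly T k := by
  rw [lowPoly, restrictSupport_eq_span] at hp
  refine Submodule.span_le.2 ?_ hp
  rintro _ ⟨m, ⟨hm, hd⟩, rfl⟩
  rcases (Nat.lt_succ_iff.1 hd).eq_or_lt with hd | hd
  · refine Submodule.mem_sup_left ?_
    have h1 := monomial_mul_mem_initPart hm hg.mem_initPart
    have h2 := Submodule.smul_mem _ c⁻¹ h1
    rw [add_zero, hd] at h2
    convert h2 using 1
    rw [mul_comm, C_mul', smul_smul, inv_mul_cancel₀ hc, one_smul]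
  · exact Submodule.mem_sup_right (monomial_mem_lowPoly 1 hm hd)

/-- Modulo `X n ^ 2 - X n`, every polynomial is of degree at most one in `X n`. -/
theorem exists_reduction {n : ι} {k : ℕ} {p : MvPolynomial ι ℚ}
    (hp : p ∈ lowPoly (insert n T) (k + 1)) :
    ∃ q ∈ lowPoly T (k + 1), ∃ r ∈ lowPoly T k,
      Vanish ω (insert n T) K (p - (q + X n * r)) ∧
      p - (q + X n * r) ∈ initPart ω (insert n T) K k ⊔ lowPoly (insert n T) k := by
  have hTT : T ⊆ insert n T := Finset.subset_insert _ _
  have hnT : n ∈ insert n T := Finset.mem_insert_self _ _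
  rw [lowPoly, restrictSupport_eq_span] at hp
  induction hp using Submodule.span_induction with
  | mem x hx =>
    obtain ⟨m, ⟨hm, hd⟩, rfl⟩ := hx
    have hm' : (m.erase n).support ⊆ T := by
      rw [Finsupp.support_erase]
      intro i hi
      exact (Finset.mem_insert.1 (hm (Finset.mem_of_mem_erase hi))).resolve_left
        (Finset.ne_of_mem_erase hi)
    have hsplit : Finsupp.single n (m n) + m.erase n = m := Finsupp.single_add_erase n m
    have hdeg : m n + (m.erase n).degree = m.degree := by
      conv_rhs => rw [← hsplit, map_add, Finsupp.degree_single]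
    have hmon : (monomial m 1 : MvPolynomial ι ℚ) = X n ^ (m n) * monomial (m.erase n) 1 := by
      conv_lhs => rw [← hsplit]
      rw [X_pow_eq_monomial, monomial_mul, one_mul]
    obtain h0 | h1 : m n = 0 ∨ 1 ≤ m n := by omega
    · refine ⟨monomial m 1, ?_, 0, zero_mem _, ?_, ?_⟩
      · rw [hmon, h0, pow_zero, one_mul]
        exact monomial_mem_lowPoly 1 hm' (by omega)
      · simpa using Vanish.zero
      · simp
    · refine ⟨0, zero_mem _, monomial (m.erase n) 1, monomial_mem_lowPoly 1 hm' (by omega), ?_, ?_⟩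
      · intro v _ _
        simp only [hmon, map_sub, map_mul, map_pow, eval_X, zero_add, hval]
        split_ifs
        · simp
        · rw [zero_pow (by omega)]; simp
      · have hX : X n * monomial (m.erase n) 1 ∈ lowPoly (insert n T) ((m.erase n).degree + 2) :=
          X_mul_mem_lowPoly hnT (monomial_mem_lowPoly 1 (hm'.trans hTT) (Nat.lt_succ_self _))
        obtain h1 | h2 : m n = 1 ∨ 2 ≤ m n := by omega
        · have : (monomial m 1 : MvPolynomial ι ℚ) - (0 + X n * monomial (m.erase n) 1) = 0 := by
            rw [hmon, h1]; ring
          simp only [this]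
          exact zero_mem _
        · rw [zero_add]
          rcases (Nat.lt_succ_iff.1 hd).eq_or_lt with hd | hd
          · refine sub_mem (Submodule.mem_sup_left ?_) (Submodule.mem_sup_right
              (lowPoly_mono le_rfl (by omega) hX))
            refine Submodule.subset_span ⟨Finsupp.single n (m n - 2) + m.erase n, 2, X n ^ 2,
              ?_, .sq n hnT, ?_, ?_⟩
            · refine Finsupp.support_add.trans (Finset.union_subset
                (Finsupp.support_single_subset.trans (by simp)) (hm'.trans hTT))
            · rw [map_add, Finsupp.degree_single]; omega
            · beta_reduce
              rw [hmon, ← one_mul (1 : ℚ), ← monomial_mul, ← X_pow_eq_monomial, one_mul,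
                mul_right_comm, ← pow_add, Nat.sub_add_cancel h2]
          · exact Submodule.mem_sup_right (sub_mem (monomial_mem_lowPoly 1 hm hd)
              (lowPoly_mono le_rfl (by omega) hX))
  | zero => exact ⟨0, zero_mem _, 0, zero_mem _, by simpa using Vanish.zero, by simp⟩
  | add x y _ _ hx hy =>
    obtain ⟨q, hq, r, hr, hv, hm⟩ := hx
    obtain ⟨q', hq', r', hr', hv', hm'⟩ := hy
    have e : x + y - (q + q' + X n * (r + r')) =
      x - (q + X n * r) + (y - (q' + X n * r')) := by ring
    exact ⟨_, add_mem hq hq', _, add_mem hr hr', e ▸ hv.add hv', e ▸ add_mem hm hm'⟩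
  | smul a x _ hx =>
    obtain ⟨q, hq, r, hr, hv, hm⟩ := hx
    have e : a • x - (a • q + X n * a • r) = a • (x - (q + X n * r)) := by
      simp only [← C_mul']; ring
    exact ⟨_, Submodule.smul_mem _ a hq, _, Submodule.smul_mem _ a hr,
      by rw [e, ← C_mul']; exact hv.mul _, e ▸ Submodule.smul_mem _ a hm⟩

/-- The leading term of a polynomial of degree at most `k` that vanishes on the complement lies in
the ideal. The induction on the set of hyperplanes compares the deletion of `H n` with the
restriction to `H n`. -/
theorem mem_initPart_sup_of_vanish (T : Finset ι) (K : AffineSubspace ℝ V) {k : ℕ}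
    {p : MvPolynomial ι ℚ} (hp : p ∈ lowPoly T (k + 1)) (hv : Vanish ω T K p) :
    p ∈ initPart ω T K k ⊔ lowPoly T k := by
  induction T using Finset.induction_on generalizing K k p with
  | empty =>
    by_cases hK : ∃ v, v ∈ K
    · obtain ⟨v, hvK⟩ := hK
      have hpC : p = C (coeff 0 p) := by
        ext m
        rw [coeff_C]
        split_ifs with h
        · rw [h]
        · by_contra hm
          have := (mem_lowPoly.1 hp m (mem_support_iff.2 hm)).1
          exact h (Finsupp.support_eq_empty.1 (Finset.subset_empty.1 this)).symm
      have h0 := hv v hvK (by simp)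
      rw [hpC, eval_C] at h0
      rw [hpC, h0, C_0]
      exact zero_mem _
    · push Not at hK
      refine mem_sup_of_const one_ne_zero ?_ hp
      have := IsGen.empty (ω := ω) (T := ∅) (K := K) ∅ (by simp) fun v h => absurd h (hK v)
      simpa using this
  | insert n T hn ih =>
    have hTT : T ⊆ insert n T := Finset.subset_insert _ _
    have hnT : n ∈ insert n T := Finset.mem_insert_self _ _
    by_cases hK : ∃ w ∈ K, ω n w ≠ 0
    · obtain ⟨w, hw, hwn⟩ := hK
      -- induction on a bound `e` for the degree of the coefficient `r` of `X n`
      have inner : ∀ e ≤ k, ∀ q ∈ lowPoly T (k + 1), ∀ r ∈ lowPoly T e,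
          Vanish ω (insert n T) K (q + X n * r) →
          q + X n * r ∈ initPart ω (insert n T) K k ⊔ lowPoly (insert n T) k := by
        intro e
        induction e with
        | zero =>
          intro _ q hq r hr hqr
          rw [lowPoly_zero hr, mul_zero, add_zero] at hqr ⊢
          exact sup_le_sup (initPart_mono hTT k) (lowPoly_mono hTT le_rfl)
            (ih K hq (hqr.delete hq hw hwn))
        | succ e ihe =>
          intro he q hq r hr hqr
          obtain ⟨u, hu, s, hs, rfl⟩ := Submodule.mem_sup.1
            (ih (cutBy K (ω n)) hr (hqr.jump hq hr hw hwn))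
          obtain ⟨h, hh, l, hl, w', hw', hv', hlow⟩ := restrictionLift_of_mem hn hu
          have e1 : q + X n * (u + s) = (q - h + X n * (s - l)) + (h + X n * (u + l)) := by ring
          have hvan : Vanish ω (insert n T) K (q - h + X n * (s - l)) := by
            rw [eq_sub_of_add_eq e1.symm]
            exact hqr.sub hv'
          rw [e1]
          refine add_mem (ihe (by omega) _ (sub_mem hq (lowPoly_mono le_rfl (by omega) hh)) _
            (sub_mem hs hl) hvan) ?_
          have e2 : h + X n * (u + l) = w' + ((h + X n * u - w') + X n * l) := by ring
          have hrest : (h + X n * u - w') + X n * l ∈ lowPoly (insert n T) (e + 1) :=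
            add_mem hlow (X_mul_mem_lowPoly hnT (lowPoly_mono hTT le_rfl hl))
          rcases he.eq_or_lt with rfl | hlt
          · rw [e2]
            exact add_mem (Submodule.mem_sup_left hw') (Submodule.mem_sup_right hrest)
          · refine Submodule.mem_sup_right (add_mem
              (lowPoly_mono hTT (by omega) hh) ?_)
            have hul : u + l ∈ lowPoly T (e + 1) := by
              have := sub_mem hr (lowPoly_mono le_rfl (Nat.le_succ e) hs)
              rw [add_sub_cancel_right] at this
              exact add_mem this (lowPoly_mono le_rfl (Nat.le_succ _) hl)
            exact lowPoly_mono le_rfl (by omega)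
              (X_mul_mem_lowPoly hnT (lowPoly_mono hTT le_rfl hul))
      obtain ⟨q, hq, r, hr, hvr, hm⟩ := exists_reduction (ω := ω) (K := K) hp
      have hqr : Vanish ω (insert n T) K (q + X n * r) := by
        rw [← sub_sub_cancel p (q + X n * r)]
        exact hv.sub hvr
      rw [← sub_add_cancel p (q + X n * r)]
      exact add_mem hm (inner k le_rfl q hq r hr hqr)
    · push Not at hK
      by_cases hne : ∃ v, v ∈ K
      · -- `ω n` vanishes on `K`, so both sides of `H n` are empty
        obtain ⟨v, hvK⟩ := hne
        refine mem_sup_of_const one_ne_zero ?_ hp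
        have := IsGen.circuit (ω := ω) (T := insert n T) (K := K) {n} (by simp) (fun _ => 1)
          (fun _ => Or.inl rfl) (fun z hz => ⟨n, by simp, by simp [hK z hz]⟩) v hvK
          (by simpa using hK v hvK)
        simpa [circuitPoly] using this
      · push Not at hne
        refine mem_sup_of_const one_ne_zero ?_ hp
        have := IsGen.empty (ω := ω) (T := insert n T) (K := K) ∅ (by simp)
          fun v h => absurd h (hne v)
        simpa using this

end InitialPart

/-! ### Comparison with the ideal of the statement -/

section Comparison

theorem IsGen.isHomogeneous {ι V : Type*} [AddCommGroup V] [Module ℝ V] [DecidableEq ι]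
    {ω : ι → V →ᵃ[ℝ] ℝ} {T : Finset ι} {K : AffineSubspace ℝ V} {e : ℕ} {g : MvPolynomial ι ℚ}
    (hg : IsGen ω T K e g) : g.IsHomogeneous e := by
  have hprod : ∀ S : Finset ι, (∏ i ∈ S, X i : MvPolynomial ι ℚ).IsHomogeneous S.card := by
    intro S
    simpa using IsHomogeneous.prod S (fun i => (X i : MvPolynomial ι ℚ)) (fun _ => 1)
      fun i _ => isHomogeneous_X ℚ i
  cases hg with
  | sq i hi => exact isHomogeneous_X_pow i 2
  | empty S hS h => exact hprod S
  | circuit S hS σ hσ h c hc hz =>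
    refine IsHomogeneous.sum _ _ _ fun k hk => ?_
    rw [← Finset.card_erase_of_mem hk, ← zero_add (S.erase k).card]
    exact (isHomogeneous_C _ _).mul (hprod _)

theorem isHomogeneous_of_mem_initPart {ι V : Type*} [AddCommGroup V] [Module ℝ V] [DecidableEq ι]
    {ω : ι → V →ᵃ[ℝ] ℝ} {T : Finset ι} {K : AffineSubspace ℝ V} {d : ℕ} {u : MvPolynomial ι ℚ}
    (hu : u ∈ initPart ω T K d) : u.IsHomogeneous d := by
  rw [← mem_homogeneousSubmodule]
  refine Submodule.span_le.2 ?_ hu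
  rintro _ ⟨m, e, g, hm, hg, rfl, rfl⟩
  exact (isHomogeneous_monomial 1 rfl).mul hg.isHomogeneous

/-- The circuit relation in terms of the two sets of positive and negative indices. -/
theorem circuitPoly_union {ι : Type*} [DecidableEq ι] {σ : ι → ℚ} {Sp Sm : Finset ι}
    (hd : Disjoint Sp Sm) (hp : ∀ i ∈ Sp, σ i = 1) (hm : ∀ i ∈ Sm, σ i = -1) :
    (∑ k ∈ Sm, ((∏ i ∈ Sp, X i) * ∏ j ∈ Sm.erase k, X j)) -
      ∑ k ∈ Sp, ((∏ i ∈ Sp.erase k, X i) * ∏ j ∈ Sm, X j) = -circuitPoly σ (Sp ∪ Sm) := by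
  rw [circuitPoly, Finset.sum_union hd, neg_add, ← Finset.sum_neg_distrib,
    ← Finset.sum_neg_distrib, sub_eq_add_neg, add_comm, ← Finset.sum_neg_distrib]
  congr 1
  · refine Finset.sum_congr rfl fun k hk => ?_
    rw [hp k hk, C_1, one_mul, Finset.erase_union_distrib,
      Finset.erase_eq_of_notMem (Finset.disjoint_left.1 hd hk),
      Finset.prod_union (Finset.disjoint_of_subset_left (Finset.erase_subset _ _) hd)]
  · refine Finset.sum_congr rfl fun k hk => ?_
    rw [hm k hk, C_neg, C_1, neg_one_mul, neg_neg, Finset.erase_union_distrib,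
      Finset.erase_eq_of_notMem (Finset.disjoint_right.1 hd hk),
      Finset.prod_union (Finset.disjoint_of_subset_right (Finset.erase_subset _ _) hd)]

theorem IsGen.mem_bIdeal {ω : Fin n → V →ᵃ[ℝ] ℝ} {e : ℕ} {g : MvPolynomial (Fin n) ℚ}
    (hg : IsGen ω Finset.univ ⊤ e g) : g ∈ bIdeal (Hyp ω) (Hplus ω) (Hminus ω) := by
  cases hg with
  | sq i hi => exact Ideal.subset_span (Or.inl (Or.inl ⟨i, rfl⟩))
  | empty S hS h =>
    refine Ideal.subset_span (Or.inl (Or.inr ⟨S, ?_, rfl⟩))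
    rw [Set.eq_empty_iff_forall_notMem]
    intro v hv
    obtain ⟨i, hi, hne⟩ := h v (AffineSubspace.mem_top ℝ V v)
    exact hne (Set.mem_iInter₂.1 hv i hi)
  | circuit S hS σ hσ h c hc hz =>
    have hunion : S.filter (fun i => σ i = 1) ∪ S.filter (fun i => σ i = -1) = S := by
      rw [← Finset.filter_or, Finset.filter_true_of_mem fun i _ => hσ i]
    have hdisj : Disjoint (S.filter fun i => σ i = 1) (S.filter fun i => σ i = -1) := by
      rw [Finset.disjoint_filter]
      intro i _ h1 h2
      rw [h1] at h2
      norm_num at h2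
    rw [← neg_mem_iff, ← hunion, ← circuitPoly_union hdisj
      (fun i hi => (Finset.mem_filter.1 hi).2) (fun i hi => (Finset.mem_filter.1 hi).2)]
    refine Ideal.subset_span (Or.inr ⟨_, _, hdisj, ?_, ?_, rfl⟩)
    · rw [Set.eq_empty_iff_forall_notMem]
      rintro v ⟨hv1, hv2⟩
      obtain ⟨i, hi, hle⟩ := h v (AffineSubspace.mem_top ℝ V v)
      rcases hσ i with hs | hs
      · have h3 : 0 < ω i v := Set.mem_iInter₂.1 hv1 i (Finset.mem_filter.2 ⟨hi, hs⟩)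
        rw [hs] at hle
        push_cast at hle
        linarith
      · have h3 : ω i v < 0 := Set.mem_iInter₂.1 hv2 i (Finset.mem_filter.2 ⟨hi, hs⟩)
        rw [hs] at hle
        push_cast at hle
        linarith
    · rw [hunion]
      exact Set.Nonempty.ne_empty ⟨c, Set.mem_iInter₂.2 hz⟩

theorem mem_bIdeal_of_mem_initPart {ω : Fin n → V →ᵃ[ℝ] ℝ} {d : ℕ} {u : MvPolynomial (Fin n) ℚ}
    (hu : u ∈ initPart ω Finset.univ ⊤ d) : u ∈ bIdeal (Hyp ω) (Hplus ω) (Hminus ω) := by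
  have : initPart ω Finset.univ ⊤ d ≤
      (bIdeal (Hyp ω) (Hplus ω) (Hminus ω)).restrictScalars ℚ := by
    refine Submodule.span_le.2 ?_
    rintro _ ⟨m, e, g, hm, hg, rfl, rfl⟩
    exact Ideal.mul_mem_left _ _ hg.mem_bIdeal
  exact this hu

theorem bIdeal_le_iSup (ω : Fin n → V →ᵃ[ℝ] ℝ) {p : MvPolynomial (Fin n) ℚ}
    (hp : p ∈ bIdeal (Hyp ω) (Hplus ω) (Hminus ω)) : p ∈ ⨆ d, initPart ω Finset.univ ⊤ d := by
  have gen : ∀ {e g}, IsGen ω Finset.univ ⊤ e g → g ∈ ⨆ d, initPart ω Finset.univ ⊤ d :=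
    fun hg => Submodule.mem_iSup_of_mem _ hg.mem_initPart
  induction hp using Submodule.span_induction with
  | mem x hx =>
    rcases hx with (⟨i, rfl⟩ | ⟨S, hS, rfl⟩) | ⟨Sp, Sm, hd, hS, hne, rfl⟩
    · exact gen (.sq i (Finset.mem_univ i))
    · refine gen (.empty S (Finset.subset_univ _) fun v _ => ?_)
      by_contra hcon
      push Not at hcon
      exact (Set.eq_empty_iff_forall_notMem.1 hS v) (Set.mem_iInter₂.2 hcon)
    · set σ : Fin n → ℚ := fun i => if i ∈ Sm then -1 else 1 with hσ
      have hp : ∀ i ∈ Sp, σ i = 1 := fun i hi => if_neg (Finset.disjoint_left.1 hd hi)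
      have hm : ∀ i ∈ Sm, σ i = -1 := fun i hi => if_pos hi
      rw [circuitPoly_union hd hp hm]
      obtain ⟨c, hc⟩ := Set.nonempty_iff_ne_empty.2 hne
      refine neg_mem (gen (.circuit _ (Finset.subset_univ _) σ (fun i => ?_) (fun v _ => ?_) c
        (AffineSubspace.mem_top ℝ V c) fun i hi => Set.mem_iInter₂.1 hc i hi))
      · by_cases hi : i ∈ Sm <;> simp [hσ, hi]
      · by_contra hcon
        push Not at hcon
        refine (Set.eq_empty_iff_forall_notMem.1 hS v) ⟨?_, ?_⟩
        · refine Set.mem_iInter₂.2 fun i hi => ?_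
          have := hcon i (Finset.mem_union_left _ hi)
          rw [hp i hi] at this
          change 0 < ω i v
          simpa using this
        · refine Set.mem_iInter₂.2 fun i hi => ?_
          have := hcon i (Finset.mem_union_right _ hi)
          rw [hm i hi] at this
          change ω i v < 0
          simpa using this
  | zero => exact zero_mem _
  | add x y _ _ hx hy => exact add_mem hx hy
  | smul a x hxs hx =>
    clear hxs
    rw [smul_eq_mul]
    induction a using MvPolynomial.induction_on' with
    | monomial m c =>
      have hc : (monomial m c : MvPolynomial (Fin n) ℚ) = c • monomial m 1 := by
        rw [smul_monomial, smul_eq_mul, mul_one]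
      rw [hc, smul_mul_assoc]
      refine Submodule.smul_mem _ _ ?_
      induction hx using Submodule.iSup_induction' with
      | mem d y hy =>
        exact Submodule.mem_iSup_of_mem _ (monomial_mul_mem_initPart (Finset.subset_univ _) hy)
      | zero => rw [mul_zero]; exact zero_mem _
      | add y z _ _ hy hz => rw [mul_add]; exact add_mem hy hz
    | add p q hp hq => rw [add_mul]; exact add_mem hp hq

/-- The ideal is homogeneous, and its homogeneous elements of degree `k` form `initPart`. -/
theorem mem_initPart_of_mem_bIdeal {ω : Fin n → V →ᵃ[ℝ] ℝ} {k : ℕ} {p : MvPolynomial (Fin n) ℚ}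
    (hp : p ∈ bIdeal (Hyp ω) (Hplus ω) (Hminus ω)) (hk : p.IsHomogeneous k) :
    p ∈ initPart ω Finset.univ ⊤ k := by
  rw [← homogeneousComponent_eq_self hk]
  have h := bIdeal_le_iSup ω hp
  clear hp hk
  induction h using Submodule.iSup_induction' with
  | mem d y hy =>
    rw [homogeneousComponent_of_mem ((mem_homogeneousSubmodule _ _).2
      (isHomogeneous_of_mem_initPart hy))]
    split_ifs with h
    · exact h ▸ hy
    · exact zero_mem _
  | zero => rw [map_zero]; exact zero_mem _
  | add y z _ _ hy hz => rw [map_add]; exact add_mem hy hz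

end Comparison

/-! ### The filtration and its associated graded -/

section Graded

theorem aeval_heaviside_apply (ω : Fin n → V →ᵃ[ℝ] ℝ) (p : MvPolynomial (Fin n) ℚ) (v : M₁ ω) :
    aeval (R := ℚ) (heaviside ω) p v = eval (hval ω v.1) p := by
  induction p using MvPolynomial.induction_on with
  | C a => simp
  | add p q hp hq => simp [hp, hq]
  | mul_X p i hp => simp [hp, hval, heaviside]

theorem aeval_heaviside_eq_zero_iff {ω : Fin n → V →ᵃ[ℝ] ℝ} {p : MvPolynomial (Fin n) ℚ} :
    aeval (R := ℚ) (heaviside ω) p = 0 ↔ Vanish ω Finset.univ ⊤ p := by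
  constructor
  · intro h v _ hv
    have := aeval_heaviside_apply ω p ⟨v, fun i => hv i (Finset.mem_univ i)⟩
    rw [h] at this
    exact this.symm
  · intro h
    ext v
    rw [aeval_heaviside_apply]
    exact h v.1 (AffineSubspace.mem_top ℝ V _) fun i _ => v.2 i

theorem restrictTotalDegree_eq_lowPoly (k : ℕ) :
    restrictTotalDegree (Fin n) ℚ k = lowPoly Finset.univ (k + 1) := by
  ext p
  rw [mem_lowPoly, restrictTotalDegree, mem_restrictSupport_iff]
  constructor
  · intro h m hm
    exact ⟨Finset.subset_univ _, Nat.lt_succ_of_le (h hm)⟩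
  · intro h m hm
    exact Nat.le_of_lt_succ (h m hm).2

theorem mem_vgFil {ω : Fin n → V →ᵃ[ℝ] ℝ} {k : ℕ} {a : LocallyConstant (M₁ ω) ℚ} :
    a ∈ vgFil ω k ↔ ∃ p ∈ lowPoly Finset.univ (k + 1), aeval (R := ℚ) (heaviside ω) p = a := by
  rw [vgFil, restrictTotalDegree_eq_lowPoly]
  rfl

theorem mem_vgPrev {ω : Fin n → V →ᵃ[ℝ] ℝ} {k : ℕ} {a : LocallyConstant (M₁ ω) ℚ} :
    a ∈ vgPrev ω k ↔ ∃ p ∈ lowPoly Finset.univ k, aeval (R := ℚ) (heaviside ω) p = a := by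
  cases k with
  | zero =>
    rw [vgPrev, Submodule.mem_bot]
    constructor
    · rintro rfl
      exact ⟨0, zero_mem _, map_zero _⟩
    · rintro ⟨p, hp, rfl⟩
      rw [lowPoly_zero hp, map_zero]
  | succ k => exact mem_vgFil

/-- The kernel of the map from homogeneous polynomials of degree `k` to `Pᵏ/Pᵏ⁻¹` is the degree
`k` part of the ideal. -/
theorem aeval_mem_vgPrev_iff {ω : Fin n → V →ᵃ[ℝ] ℝ} {k : ℕ} {p : MvPolynomial (Fin n) ℚ}
    (hk : p.IsHomogeneous k) : aeval (R := ℚ) (heaviside ω) p ∈ vgPrev ω k ↔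
      p ∈ bIdeal (Hyp ω) (Hplus ω) (Hminus ω) := by
  rw [mem_vgPrev]
  constructor
  · rintro ⟨q, hq, hqp⟩
    have hv : Vanish ω Finset.univ ⊤ (p - q) := by
      rw [← aeval_heaviside_eq_zero_iff, map_sub, hqp, sub_self]
    have hpl : p ∈ lowPoly Finset.univ (k + 1) := by
      rw [← restrictTotalDegree_eq_lowPoly, mem_restrictTotalDegree]
      exact hk.totalDegree_le
    obtain ⟨u, hu, s, hs, hus⟩ := Submodule.mem_sup.1 (mem_initPart_sup_of_vanish _ _
      (sub_mem hpl (lowPoly_mono le_rfl (Nat.le_succ k) hq)) hv)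
    have h0 : p - u = 0 := by
      refine eq_zero_of_isHomogeneous_of_mem_lowPoly (T := Finset.univ) (k := k)
        (hk.sub (isHomogeneous_of_mem_initPart hu)) ?_
      have : p - u = s + q := by
        linear_combination (-1 : MvPolynomial (Fin n) ℚ) * hus
      rw [this]
      exact add_mem hs hq
    rw [sub_eq_zero.1 h0]
    exact mem_bIdeal_of_mem_initPart hu
  · intro hp
    obtain ⟨l, hl, hv⟩ := exists_lift_of_mem_initPart (mem_initPart_of_mem_bIdeal hp hk)
    refine ⟨-l, neg_mem hl, ?_⟩
    have := aeval_heaviside_eq_zero_iff.2 hv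
    rw [map_add] at this
    rw [map_neg]
    exact (eq_neg_of_add_eq_zero_left this).symm

/-- Evaluation at the Heaviside functions, as a map from homogeneous polynomials of degree `k` to
`Pᵏ`. -/
noncomputable def evalHom (ω : Fin n → V →ᵃ[ℝ] ℝ) (k : ℕ) :
    homogeneousSubmodule (Fin n) ℚ k →ₗ[ℚ] vgFil ω k :=
  (aeval (R := ℚ) (heaviside ω)).toLinearMap.restrict fun _ hp =>
    Submodule.mem_map_of_mem ((mem_restrictTotalDegree _ _ _).2
      ((mem_homogeneousSubmodule _ _).1 hp).totalDegree_le)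

/-- The symbol map from homogeneous polynomials of degree `k` to `Pᵏ/Pᵏ⁻¹`. -/
noncomputable def toGr (ω : Fin n → V →ᵃ[ℝ] ℝ) (k : ℕ) :
    homogeneousSubmodule (Fin n) ℚ k →ₗ[ℚ] vgGr ω k :=
  (Submodule.mkQ _).comp (evalHom ω k)

/-- The quotient map from homogeneous polynomials of degree `k` to `B(𝒜)ₖ`. -/
noncomputable def toB (ω : Fin n → V →ᵃ[ℝ] ℝ) (k : ℕ) :
    homogeneousSubmodule (Fin n) ℚ k →ₗ[ℚ] bGrade (Hyp ω) (Hplus ω) (Hminus ω) k :=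
  (Ideal.Quotient.mkₐ ℚ (bIdeal (Hyp ω) (Hplus ω) (Hminus ω))).toLinearMap.restrict fun _ hp =>
    Submodule.mem_map_of_mem hp

theorem toGr_eq_mk_iff {ω : Fin n → V →ᵃ[ℝ] ℝ} {k : ℕ} {p : homogeneousSubmodule (Fin n) ℚ k}
    {a : vgFil ω k} : toGr ω k p = Submodule.Quotient.mk a ↔
      aeval (R := ℚ) (heaviside ω) p.1 - a.1 ∈ vgPrev ω k :=
  Submodule.Quotient.eq _

theorem toGr_surjective (ω : Fin n → V →ᵃ[ℝ] ℝ) (k : ℕ) : Function.Surjective (toGr ω k) := by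
  intro x
  obtain ⟨a, rfl⟩ := Submodule.Quotient.mk_surjective _ x
  obtain ⟨p, hp, hpa⟩ := mem_vgFil.1 a.2
  refine ⟨⟨homogeneousComponent k p, homogeneousComponent_mem k p⟩, ?_⟩
  rw [toGr_eq_mk_iff, ← hpa, ← map_sub, mem_vgPrev]
  refine ⟨_, mem_lowPoly.2 fun m hm => ⟨Finset.subset_univ _, ?_⟩, rfl⟩
  rw [mem_support_iff, coeff_sub, coeff_homogeneousComponent] at hm
  split_ifs at hm with h
  · simp at hm
  · rw [zero_sub, neg_ne_zero, ← mem_support_iff] at hm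
    exact lt_of_le_of_ne (Nat.le_of_lt_succ (mem_lowPoly.1 hp m hm).2) h

theorem toB_surjective (ω : Fin n → V →ᵃ[ℝ] ℝ) (k : ℕ) : Function.Surjective (toB ω k) := by
  rintro ⟨_, p, hp, rfl⟩
  exact ⟨⟨p, hp⟩, rfl⟩

theorem ker_toGr (ω : Fin n → V →ᵃ[ℝ] ℝ) (k : ℕ) :
    LinearMap.ker (toGr ω k) = LinearMap.ker (toB ω k) := by
  ext p
  rw [LinearMap.mem_ker, LinearMap.mem_ker, ← Submodule.Quotient.mk_zero, toGr_eq_mk_iff,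
    ← Subtype.coe_inj]
  change _ ↔ Ideal.Quotient.mk _ p.1 = 0
  rw [Ideal.Quotient.eq_zero_iff_mem, ← aeval_mem_vgPrev_iff ((mem_homogeneousSubmodule _ _).1 p.2)]
  simp

/-- The isomorphism `Pᵏ/Pᵏ⁻¹ ≃ B(𝒜)ₖ`: both sides are the quotient of the homogeneous polynomials
of degree `k` by the same subspace. -/
noncomputable def grEquiv (ω : Fin n → V →ᵃ[ℝ] ℝ) (k : ℕ) :
    vgGr ω k ≃ₗ[ℚ] bGrade (Hyp ω) (Hplus ω) (Hminus ω) k :=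
  ((toGr ω k).quotKerEquivOfSurjective (toGr_surjective ω k)).symm.trans
    ((Submodule.quotEquivOfEq _ _ (ker_toGr ω k)).trans
      ((toB ω k).quotKerEquivOfSurjective (toB_surjective ω k)))

theorem grEquiv_toGr (ω : Fin n → V →ᵃ[ℝ] ℝ) (k : ℕ) (p : homogeneousSubmodule (Fin n) ℚ k) :
    grEquiv ω k (toGr ω k p) = toB ω k p := by
  rw [grEquiv, LinearEquiv.trans_apply, LinearMap.quotKerEquivOfSurjective_symm_apply,
    LinearEquiv.trans_apply, Submodule.quotEquivOfEq_mk,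
    LinearMap.quotKerEquivOfSurjective_apply_mk]

theorem mul_mem_vgPrev {ω : Fin n → V →ᵃ[ℝ] ℝ} {k l : ℕ} {a b : LocallyConstant (M₁ ω) ℚ}
    (ha : a ∈ vgFil ω k) (hb : b ∈ vgPrev ω l) : a * b ∈ vgPrev ω (k + l) := by
  obtain ⟨p, hp, rfl⟩ := mem_vgFil.1 ha
  obtain ⟨q, hq, rfl⟩ := mem_vgPrev.1 hb
  exact mem_vgPrev.2 ⟨p * q, mul_mem_lowPoly hp hq, map_mul _ _ _⟩

end Graded

/-- The associated graded algebra `⊕ₖ Pᵏ/Pᵏ⁻¹` of the VG filtration of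
`H⁰(M₁(𝒜))` is isomorphic as a graded `ℚ`-algebra to `B(𝒜)` (graded by total degree in
the generators): there are linear equivalences `f k : Pᵏ/Pᵏ⁻¹ ≃ B(𝒜)ₖ` sending the
class of the constant function `1` to `1` and compatible with multiplication. -/
theorem vg_associated_graded (ω : Fin n → V →ᵃ[ℝ] ℝ) (hω : ∀ i, (ω i).linear ≠ 0) :
    ∃ f : ∀ k : ℕ, vgGr ω k ≃ₗ[ℚ] ↥(bGrade (Hyp ω) (Hplus ω) (Hminus ω) k),
      (∀ a : ↥(vgFil ω 0), (a : LocallyConstant (M₁ ω) ℚ) = 1 →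
        ((f 0 (Submodule.Quotient.mk a) :
            ↥(bGrade (Hyp ω) (Hplus ω) (Hminus ω) 0)) :
          BAlg (Hyp ω) (Hplus ω) (Hminus ω)) = 1) ∧
      (∀ (k l : ℕ) (a : ↥(vgFil ω k)) (b : ↥(vgFil ω l)) (c : ↥(vgFil ω (k + l))),
        (c : LocallyConstant (M₁ ω) ℚ) =
            (a : LocallyConstant (M₁ ω) ℚ) * (b : LocallyConstant (M₁ ω) ℚ) →
        ((f (k + l) (Submodule.Quotient.mk c) :
            ↥(bGrade (Hyp ω) (Hplus ω) (Hminus ω) (k + l))) :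
          BAlg (Hyp ω) (Hplus ω) (Hminus ω)) =
        ((f k (Submodule.Quotient.mk a) :
            ↥(bGrade (Hyp ω) (Hplus ω) (Hminus ω) k)) :
          BAlg (Hyp ω) (Hplus ω) (Hminus ω)) *
        ((f l (Submodule.Quotient.mk b) :
            ↥(bGrade (Hyp ω) (Hplus ω) (Hminus ω) l)) :
          BAlg (Hyp ω) (Hplus ω) (Hminus ω))) := by
  refine ⟨grEquiv ω, ?_, ?_⟩
  · intro a ha
    have h : toGr ω 0 ⟨1, (mem_homogeneousSubmodule _ _).2 (isHomogeneous_one _ _)⟩ =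
        Submodule.Quotient.mk a := by
      rw [toGr_eq_mk_iff, ha, map_one, sub_self]
      exact zero_mem _
    rw [← h, grEquiv_toGr]
    rfl
  · intro k l a b c hc
    obtain ⟨p, hp⟩ := toGr_surjective ω k (Submodule.Quotient.mk a)
    obtain ⟨q, hq⟩ := toGr_surjective ω l (Submodule.Quotient.mk b)
    have h : toGr ω (k + l) ⟨p.1 * q.1, (mem_homogeneousSubmodule _ _).2
        (((mem_homogeneousSubmodule _ _).1 p.2).mul ((mem_homogeneousSubmodule _ _).1 q.2))⟩ =
        Submodule.Quotient.mk c := by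
      rw [toGr_eq_mk_iff] at hp hq ⊢
      have h1 := mul_mem_vgPrev (evalHom ω k p).2 hq
      have h2 := mul_mem_vgPrev b.2 hp
      rw [add_comm l k] at h2
      convert add_mem h1 h2 using 1
      change _ = aeval (heaviside ω) p.1 * _ + _
      rw [hc, map_mul]
      ring
    rw [← h, ← hp, ← hq, grEquiv_toGr, grEquiv_toGr, grEquiv_toGr]
    exact map_mul (Ideal.Quotient.mk _) p.1 q.1
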